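/- arXiv:1406.2622 — 7 statements merged into one kernel-verified Lean document; each statement's English description precedes it below -/
import Mathlib

section
/- Let α be a type with decidable equality. For finite multisets s, t over α, define H(s,t) = max(card s, card t) − card(s ∩ t), where ∩ denotes multiset intersection and card denotes multiset cardinality. (This function coincides with the paper's generalized Hamming metric, which counts the minimal number of insertions, deletions and changes needed to transform one unordered training set into the other, permutations being free.) Then H is a metric on the set of finite multisets over α: H(s,t) ≥ 0; H(s,t) = 0 if and only if s = t; H(s,t) = H(t,s); and H(s,u) ≤ H(s,t) + H(t,u) for all finite multisets s, t, u. -/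
theorem generalized_hamming_is_metric {α : Type*} [DecidableEq α]
    (H : Multiset α → Multiset α → ℕ)
    (hH : ∀ s t : Multiset α,
      H s t = max (Multiset.card s) (Multiset.card t) - Multiset.card (s ∩ t)) :
    (∀ s t : Multiset α, 0 ≤ H s t) ∧
    (∀ s t : Multiset α, H s t = 0 ↔ s = t) ∧
    (∀ s t : Multiset α, H s t = H t s) ∧
    (∀ s t u : Multiset α, H s u ≤ H s t + H t u) := by
  have h1 : ∀ s t : Multiset α, Multiset.card (s ∩ t) ≤ Multiset.card s :=
    fun s t => Multiset.card_le_card Multiset.inter_le_left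
  have h2 : ∀ s t : Multiset α, Multiset.card (s ∩ t) ≤ Multiset.card t :=
    fun s t => Multiset.card_le_card Multiset.inter_le_right
  refine ⟨fun s t => Nat.zero_le _, fun s t => ⟨fun h => ?_, fun h => ?_⟩, fun s t => ?_,
    fun s t u => ?_⟩
  · rw [hH] at h
    have a := h1 s t
    have b := h2 s t
    have e1 : s ∩ t = s := Multiset.eq_of_le_of_card_le Multiset.inter_le_left (by omega)
    have e2 : s ∩ t = t := Multiset.eq_of_le_of_card_le Multiset.inter_le_right (by omega)
    exact e1.symm.trans e2
  · subst h
    rw [hH]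
    have e : s ∩ s = s := inf_idem s
    rw [e]
    simp
  · rw [hH, hH, max_comm, Multiset.inter_comm]
  · have key : (s ∩ t) + (t ∩ u) ≤ t + (s ∩ u) := by
      rw [Multiset.le_iff_count]
      intro a
      simp only [Multiset.count_add, Multiset.count_inter]
      omega
    have k := Multiset.card_le_card key
    rw [Multiset.card_add, Multiset.card_add] at k
    rw [hH, hH, hH]
    have := h1 s t
    have := h2 s t
    have := h1 t u
    have := h2 t u
    have := h1 s u
    have := h2 s u
    omega
end

section
/- Let n ≥ 1, λ > 0, m > 1, and d : Fin n → ℝ with dᵢ ≥ 0 for all i, and Y' ∈ ℝⁿ such that Σᵢ dᵢ·Y'ᵢ² > 0. Define F on the positive reals by F(C) = (Σᵢ 4·dᵢ·Y'ᵢ² / (2·dᵢ + λ·m·n·C)²)^(m/2 − 1) − C. Then F has exactly one root in (0, ∞): there exists a unique C₀ > 0 with F(C₀) = 0. -/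
theorem F_has_unique_positive_root (n : ℕ) (hn : 1 ≤ n)
    (lam m : ℝ) (hlam : 0 < lam) (hm : 1 < m)
    (d : Fin n → ℝ) (hd : ∀ i, 0 ≤ d i)
    (Y' : Fin n → ℝ) (hY' : 0 < ∑ i, d i * (Y' i) ^ 2)
    (F : ℝ → ℝ)
    (hF : ∀ C : ℝ, 0 < C →
      F C = (∑ i, 4 * d i * (Y' i) ^ 2 / (2 * d i + lam * m * n * C) ^ 2) ^ (m / 2 - 1) - C) :
    ∃! C₀ : ℝ, 0 < C₀ ∧ F C₀ = 0 := by
  have hk : 0 < lam * m * n := by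
    have : (0 : ℝ) < n := by exact_mod_cast hn
    have : 0 < m := by linarith
    positivity
  generalize lam * m * n = k at hk hF
  obtain ⟨p, hp⟩ : ∃ p, p = m / 2 - 1 := ⟨_, rfl⟩
  rw [← hp] at hF
  have hp1 : 0 < 2 * p + 1 := by linarith
  obtain ⟨S, hS⟩ : ∃ S : ℝ → ℝ, S = fun C => ∑ i, 4 * d i * (Y' i) ^ 2 / (2 * d i + k * C) ^ 2 :=
    ⟨_, rfl⟩
  have hF' : ∀ C, 0 < C → F C = S C ^ p - C := by
    intro C hC; rw [hF C hC, hS]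
  have hden : ∀ i C, 0 < C → 0 < 2 * d i + k * C := by
    intro i C hC
    have := hd i
    positivity
  have hSpos : ∀ C, 0 < C → 0 < S C := by
    intro C hC
    obtain ⟨i, -, hi⟩ := Finset.exists_lt_of_sum_lt (s := Finset.univ) (f := fun _ : Fin n => (0 : ℝ))
      (g := fun i => d i * (Y' i) ^ 2) (by simpa using hY')
    rw [hS]
    refine Finset.sum_pos' (fun j _ => ?_) ⟨i, Finset.mem_univ i, ?_⟩
    · have := hd j
      positivity
    · have := hden i C hC
      have h4 : 0 < 4 * d i * (Y' i) ^ 2 := by linarith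
      positivity
  have hanti : ∀ a b, 0 < a → a ≤ b → S b ≤ S a := by
    intro a b ha hab
    rw [hS]
    refine Finset.sum_le_sum fun i _ => ?_
    have h1 := hden i a ha
    have := hd i
    gcongr
  have hmono : ∀ a b, 0 < a → a ≤ b → a ^ 2 * S a ≤ b ^ 2 * S b := by
    intro a b ha hab
    have hb : 0 < b := by linarith
    simp only [hS, Finset.mul_sum]
    refine Finset.sum_le_sum fun i _ => ?_
    have h1 := hden i a ha
    have h2 := hden i b hb
    have h3 := hd i
    have h4 : a / (2 * d i + k * a) ≤ b / (2 * d i + k * b) := by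
      rw [div_le_div_iff₀ h1 h2]
      nlinarith
    have h5 : (a / (2 * d i + k * a)) ^ 2 ≤ (b / (2 * d i + k * b)) ^ 2 := by
      gcongr
    calc _ = 4 * d i * (Y' i) ^ 2 * (a / (2 * d i + k * a)) ^ 2 := by rw [div_pow]; ring
      _ ≤ 4 * d i * (Y' i) ^ 2 * (b / (2 * d i + k * b)) ^ 2 := by gcongr
      _ = _ := by rw [div_pow]; ring
  obtain ⟨s, hs⟩ : ∃ s : ℝ → ℝ, s = fun c => Real.log (S (Real.exp c)) := ⟨_, rfl⟩
  have hsa : ∀ a b, a ≤ b → s b ≤ s a := by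
    intro a b hab
    rw [hs]
    exact Real.log_le_log (hSpos _ (Real.exp_pos _))
      (hanti _ _ (Real.exp_pos _) (Real.exp_le_exp.2 hab))
  have hsm : ∀ a b, a ≤ b → 2 * a + s a ≤ 2 * b + s b := by
    intro a b hab
    have key : ∀ c, 2 * c + s c = Real.log (Real.exp c ^ 2 * S (Real.exp c)) := by
      intro c
      have := hSpos _ (Real.exp_pos c)
      rw [Real.log_mul (by positivity) this.ne', Real.log_pow, Real.log_exp, hs]
      norm_num
    rw [key, key]
    have := hSpos _ (Real.exp_pos a)
    exact Real.log_le_log (by positivity)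
      (hmono _ _ (Real.exp_pos _) (Real.exp_le_exp.2 hab))
  have hroot : ∀ c, F (Real.exp c) = 0 ↔ p * s c = c := by
    intro c
    rw [hF' _ (Real.exp_pos c), sub_eq_zero, Real.rpow_def_of_pos (hSpos _ (Real.exp_pos c)),
      Real.exp_eq_exp, hs, mul_comm]
  have hcont : Continuous s := by
    rw [hs]
    refine Continuous.log ?_ (fun c => (hSpos _ (Real.exp_pos c)).ne')
    rw [hS]
    refine continuous_finsetSum _ fun i _ => ?_
    refine Continuous.div (by fun_prop) (by fun_prop) fun c => ?_
    exact (pow_pos (hden i _ (Real.exp_pos c)) 2).ne'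
  have huniq : ∀ a b, a ≤ b → p * s a = a → p * s b = b → a = b := by
    intro a b hab ha hb
    have h1 := hsa a b hab
    have h2 := hsm a b hab
    have h3 : (2 * p + 1) * s a ≤ (2 * p + 1) * s b := by linarith
    have h4 := le_of_mul_le_mul_left h3 hp1
    rw [← ha, ← hb, le_antisymm h4 h1]
  have hex : ∃ c, p * s c = c := by
    obtain ⟨M, hM⟩ : ∃ M, M = |p * s 0| * (1 + 1 / (2 * p + 1)) := ⟨_, rfl⟩
    have hA := abs_nonneg (p * s 0)
    have hq : 0 < 1 / (2 * p + 1) := by positivity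
    have hM1 : |p * s 0| ≤ M := by rw [hM]; nlinarith
    have hM2 : |p * s 0| ≤ (2 * p + 1) * M := by
      have : (2 * p + 1) * M = |p * s 0| * (2 * p + 1) + |p * s 0| := by
        rw [hM]; field_simp; try ring
      rw [this]; nlinarith
    have hM0 : 0 ≤ M := hA.trans hM1
    have e1 := le_abs_self (p * s 0)
    have e2 := neg_abs_le (p * s 0)
    have a1 := hsa 0 M hM0
    have a2 := hsm 0 M hM0
    have b1 := hsa (-M) 0 (by linarith)
    have b2 := hsm (-M) 0 (by linarith)
    have hup : p * s M - M ≤ 0 := by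
      rcases le_total 0 p with h | h <;> nlinarith
    have hlo : 0 ≤ p * s (-M) - -M := by
      rcases le_total 0 p with h | h <;> nlinarith
    have hc : ContinuousOn (fun c => p * s c - c) (Set.Icc (-M) M) := by fun_prop
    obtain ⟨c, -, h⟩ := intermediate_value_Icc' (by linarith : -M ≤ M) hc ⟨hup, hlo⟩
    exact ⟨c, by linarith [h]⟩
  obtain ⟨c, hc⟩ := hex
  refine ⟨Real.exp c, ⟨Real.exp_pos c, (hroot c).2 hc⟩, ?_⟩
  rintro y ⟨hy, hy0⟩
  rw [← Real.exp_log hy] at hy0 ⊢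
  have h := (hroot _).1 hy0
  rcases le_total c (Real.log y) with hl | hl
  · rw [huniq _ _ hl hc h]
  · rw [huniq _ _ hl h hc]
end

section
/- Let n ≥ 1, let K be a real symmetric positive semidefinite n×n matrix, Y ∈ ℝⁿ, λ > 0 and m ≥ 1. Then the M-RLSR objective J(a) = ‖Y − K·a‖² + n·λ·(aᵀ·K·a)^(m/2) is a convex function on ℝⁿ. Moreover, if m > 1 and K is positive definite, then J is strictly convex on ℝⁿ. -/
open Matrix

theorem mrlsr_pen {n : ℕ} (K : Matrix (Fin n) (Fin n) ℝ) (hK : K.PosSemidef) (m : ℝ) (hm : 1 ≤ m) :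
    ConvexOn ℝ Set.univ (fun a : Fin n → ℝ => (a ⬝ᵥ K.mulVec a) ^ (m / 2)) := by
  obtain ⟨B, hB⟩ : ∃ B : Matrix (Fin n) (Fin n) ℝ, K = Bᴴ * B := by
    open scoped MatrixOrder in
    exact CStarAlgebra.nonneg_iff_eq_star_mul_self.mp hK.nonneg
  let L : (Fin n → ℝ) →ₗ[ℝ] EuclideanSpace ℝ (Fin n) :=
    (WithLp.linearEquiv 2 ℝ (Fin n → ℝ)).symm.toLinearMap ∘ₗ B.mulVecLin
  have key : ∀ a : Fin n → ℝ, (a ⬝ᵥ K.mulVec a) ^ (m / 2) = ‖L a‖ ^ m := by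
    intro a
    have h1 : a ⬝ᵥ K.mulVec a = ‖L a‖ ^ (2 : ℝ) := by
      rw [Real.rpow_two, EuclideanSpace.real_norm_sq_eq, hB, ← Matrix.mulVec_mulVec,
        Matrix.dotProduct_mulVec, Matrix.conjTranspose_eq_transpose_of_trivial,
        Matrix.vecMul_transpose]
      simp [L, dotProduct, sq]
    rw [h1, ← Real.rpow_mul (norm_nonneg _)]
    congr 1
    ring
  simp_rw [key]
  refine ⟨convex_univ, fun x _ y _ s t hs ht hst => ?_⟩
  have h1 : ‖L (s • x + t • y)‖ ≤ s * ‖L x‖ + t * ‖L y‖ := by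
    rw [map_add, map_smul, map_smul]
    refine (norm_add_le _ _).trans ?_
    rw [norm_smul, norm_smul, Real.norm_of_nonneg hs, Real.norm_of_nonneg ht]
  refine (Real.rpow_le_rpow (norm_nonneg _) h1 (by linarith)).trans ?_
  exact (convexOn_rpow hm).2 (norm_nonneg (L x)) (norm_nonneg (L y)) hs ht hst

theorem mrlsr_gap {n : ℕ} (K : Matrix (Fin n) (Fin n) ℝ) (Y x y : Fin n → ℝ) (s t : ℝ)
    (hst : s + t = 1) :
    (∑ i, (Y i - K.mulVec (s • x + t • y) i) ^ 2) + s * t * ∑ i, (K.mulVec x i - K.mulVec y i) ^ 2 =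
      s * (∑ i, (Y i - K.mulVec x i) ^ 2) + t * (∑ i, (Y i - K.mulVec y i) ^ 2) := by
  simp only [Finset.mul_sum, ← Finset.sum_add_distrib]
  refine Finset.sum_congr rfl fun i _ => ?_
  obtain rfl : t = 1 - s := by linarith
  simp only [Matrix.mulVec_add, Matrix.mulVec_smul, Pi.add_apply, Pi.smul_apply, smul_eq_mul]
  ring

theorem mrlsr_objective_convex (n : ℕ) (hn : 1 ≤ n)
    (K : Matrix (Fin n) (Fin n) ℝ) (hK : K.PosSemidef)
    (Y : Fin n → ℝ) (lam m : ℝ) (hlam : 0 < lam) (hm : 1 ≤ m)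
    (J : (Fin n → ℝ) → ℝ)
    (hJ : ∀ a, J a = (∑ i, (Y i - K.mulVec a i) ^ 2) + n * lam * (a ⬝ᵥ K.mulVec a) ^ (m / 2)) :
    ConvexOn ℝ Set.univ J ∧ (1 < m → K.PosDef → StrictConvexOn ℝ Set.univ J) := by
  have hc : 0 ≤ (n : ℝ) * lam := by positivity
  have hp := (mrlsr_pen K hK m hm).smul hc
  refine ⟨⟨convex_univ, fun x _ y _ s t hs ht hst => ?_⟩,
    fun _ hPD => ⟨convex_univ, fun x _ y _ hxy s t hs ht hst => ?_⟩⟩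
  · have h1 := hp.2 (Set.mem_univ x) (Set.mem_univ y) hs ht hst
    have h2 := mrlsr_gap K Y x y s t hst
    have h3 : 0 ≤ s * t * ∑ i, (K.mulVec x i - K.mulVec y i) ^ 2 := by positivity
    simp only [smul_eq_mul] at h1 ⊢
    rw [hJ, hJ, hJ]
    linarith
  · have h1 := hp.2 (Set.mem_univ x) (Set.mem_univ y) hs.le ht.le hst
    have h2 := mrlsr_gap K Y x y s t hst
    have h3 : 0 < s * t * ∑ i, (K.mulVec x i - K.mulVec y i) ^ 2 := by
      refine mul_pos (mul_pos hs ht) ?_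
      have hne : K.mulVec x ≠ K.mulVec y :=
        fun h => hxy (Matrix.mulVec_injective_of_isUnit hPD.isUnit h)
      obtain ⟨i, hi⟩ := Function.ne_iff.mp hne
      refine Finset.sum_pos' (fun _ _ => sq_nonneg _) ⟨i, Finset.mem_univ i, ?_⟩
      have := sub_ne_zero.mpr hi
      positivity
    simp only [smul_eq_mul] at h1 ⊢
    rw [hJ, hJ, hJ]
    linarith
end

section
/- Let n ≥ 1, let K be a real symmetric positive semidefinite n×n matrix, Y ∈ ℝⁿ, λ > 0 and m > 1. Let α ∈ ℝⁿ be a minimizer over ℝⁿ of the M-RLSR objective J(a) = ‖Y − K·a‖² + n·λ·(aᵀ·K·a)^(m/2), and suppose αᵀ·K·α > 0. Set λ₂ = (m/2)·λ·(αᵀ·K·α)^(m/2 − 1). Then λ₂ > 0 and α is a minimizer over ℝⁿ of the kernel ridge regression objective J₂(a) = ‖Y − K·a‖² + n·λ₂·(aᵀ·K·a). In particular, on the given training data the M-RLSR algorithm with parameter λ and the KRR algorithm with parameter λ₂ produce the same solution (weak equivalence). -/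
open Matrix

theorem mrlsr_weakly_equivalent_to_krr (n : ℕ) (hn : 1 ≤ n)
    (K : Matrix (Fin n) (Fin n) ℝ) (hK : K.PosSemidef)
    (Y : Fin n → ℝ) (lam m : ℝ) (hlam : 0 < lam) (hm : 1 < m)
    (J : (Fin n → ℝ) → ℝ)
    (hJ : ∀ a, J a = (∑ i, (Y i - K.mulVec a i) ^ 2) + n * lam * (a ⬝ᵥ K.mulVec a) ^ (m / 2))
    (α : Fin n → ℝ) (hmin : ∀ a, J α ≤ J a) (hpos : 0 < α ⬝ᵥ K.mulVec α)
    (lam₂ : ℝ) (hlam₂ : lam₂ = (m / 2) * lam * (α ⬝ᵥ K.mulVec α) ^ (m / 2 - 1))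
    (J₂ : (Fin n → ℝ) → ℝ)
    (hJ₂ : ∀ a, J₂ a = (∑ i, (Y i - K.mulVec a i) ^ 2) + n * lam₂ * (a ⬝ᵥ K.mulVec a)) :
    0 < lam₂ ∧ ∀ a, J₂ α ≤ J₂ a := by
  have hl2 : 0 < lam₂ := by
    rw [hlam₂]
    have := Real.rpow_pos_of_pos hpos (m / 2 - 1)
    positivity
  refine ⟨hl2, fun a => ?_⟩
  -- restrict both objectives to the line through `α` and `a`
  obtain ⟨d, rfl⟩ : ∃ d, a = α + d := ⟨a - α, by simp⟩
  have hquad : ∀ t : ℝ, (α + t • d) ⬝ᵥ K.mulVec (α + t • d) = α ⬝ᵥ K.mulVec α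
      + (α ⬝ᵥ K.mulVec d + d ⬝ᵥ K.mulVec α) * t + (d ⬝ᵥ K.mulVec d) * t ^ 2 := by
    intro t
    simp only [mulVec_add, mulVec_smul, add_dotProduct, dotProduct_add, smul_dotProduct,
      dotProduct_smul, smul_eq_mul]
    ring
  have hsum : ∀ t : ℝ, (∑ i, (Y i - K.mulVec (α + t • d) i) ^ 2)
      = (∑ i, (Y i - K.mulVec α i) ^ 2)
      + (∑ i, -2 * (Y i - K.mulVec α i) * K.mulVec d i) * t
      + (∑ i, (K.mulVec d i) ^ 2) * t ^ 2 := by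
    intro t
    rw [Finset.sum_mul, Finset.sum_mul, ← Finset.sum_add_distrib, ← Finset.sum_add_distrib]
    refine Finset.sum_congr rfl fun i _ => ?_
    simp only [mulVec_add, mulVec_smul, Pi.add_apply, Pi.smul_apply, smul_eq_mul]
    ring
  have hr : 0 ≤ d ⬝ᵥ K.mulVec d := by
    simpa using hK.dotProduct_mulVec_nonneg d
  have hC : 0 ≤ ∑ i, (K.mulVec d i) ^ 2 := Finset.sum_nonneg fun i _ => sq_nonneg _
  have h1 := hsum 1
  have h2 := hquad 1
  rw [one_smul] at h1 h2
  rw [hJ₂, hJ₂, h1, h2]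
  have hmin' : ∀ t : ℝ, J α ≤ J (α + t • d) := fun t => hmin _
  simp only [hJ, hsum, hquad] at hmin'
  generalize α ⬝ᵥ K.mulVec α = s at *
  generalize α ⬝ᵥ K.mulVec d + d ⬝ᵥ K.mulVec α = q at *
  generalize d ⬝ᵥ K.mulVec d = r at *
  generalize (∑ i, (K.mulVec d i) ^ 2) = C at *
  generalize (∑ i, -2 * (Y i - K.mulVec α i) * K.mulVec d i) = B at *
  generalize (∑ i, (Y i - K.mulVec α i) ^ 2) = A at *
  have hpoly : ∀ x y z : ℝ, HasDerivAt (fun t : ℝ => x + y * t + z * t ^ 2) y 0 := by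
    intro x y z
    have := (((hasDerivAt_id (0 : ℝ)).const_mul y).const_add x).add
      (((hasDerivAt_id (0 : ℝ)).pow 2).const_mul z)
    refine (this.congr_deriv ?_)
    simp
  have hder := (hpoly A B C).add (((hpoly s q r).rpow_const (p := m / 2)
    (Or.inl (by simpa using hpos.ne'))).const_mul (n * lam))
  have hloc : IsLocalMin ((fun t : ℝ => A + B * t + C * t ^ 2) +
      fun t : ℝ => n * lam * (s + q * t + r * t ^ 2) ^ (m / 2)) 0 := by
    refine Filter.Eventually.of_forall fun t => ?_
    simpa using hmin' t
  have h0 := hloc.hasDerivAt_eq_zero hder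
  have h0' : B + n * lam₂ * q = 0 := by
    rw [hlam₂, ← h0]
    simp
    ring
  have : 0 ≤ n * lam₂ * r := by positivity
  nlinarith
end

section
/- Let H be a real inner product space and let m ≥ 2 be a real number. Then for all u, v ∈ H: ‖u + v‖^m + ‖u − v‖^m ≥ 2·‖u‖^m + 2·‖v‖^m, where the powers are real powers of nonnegative reals. -/
theorem norm_pow_m_parallelogram_type_inequality
    {H : Type*} [NormedAddCommGroup H] [InnerProductSpace ℝ H]
    (m : ℝ) (hm : 2 ≤ m) (u v : H) :
    2 * ‖u‖ ^ m + 2 * ‖v‖ ^ m ≤ ‖u + v‖ ^ m + ‖u - v‖ ^ m := by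
  have hp : 1 ≤ m / 2 := by linarith
  have key : ∀ x : H, ‖x‖ ^ m = (‖x‖ ^ 2) ^ (m / 2) := by
    intro x
    rw [← Real.rpow_natCast, ← Real.rpow_mul (norm_nonneg x)]
    congr 1
    push_cast
    ring
  have hpar : (1 / 2 : ℝ) * ‖u + v‖ ^ 2 + (1 / 2 : ℝ) * ‖u - v‖ ^ 2 = ‖u‖ ^ 2 + ‖v‖ ^ 2 := by
    have := parallelogram_law_with_norm ℝ u v
    nlinarith
  have h1 := (convexOn_rpow hp).2 (Set.mem_Ici.2 (sq_nonneg ‖u + v‖))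
    (Set.mem_Ici.2 (sq_nonneg ‖u - v‖)) (by norm_num : (0 : ℝ) ≤ 1 / 2)
    (by norm_num : (0 : ℝ) ≤ 1 / 2) (by norm_num)
  simp only [smul_eq_mul] at h1
  rw [hpar] at h1
  have h2 : (‖u‖ ^ 2) ^ (m / 2) + (‖v‖ ^ 2) ^ (m / 2) ≤ (‖u‖ ^ 2 + ‖v‖ ^ 2) ^ (m / 2) := by
    have := NNReal.add_rpow_le_rpow_add (‖u‖₊ ^ 2) (‖v‖₊ ^ 2) hp
    exact_mod_cast this
  rw [key, key v, key (u + v), key (u - v)]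
  linarith
end

section
/- Let X be a type, H a real normed vector space, κ > 0, and ev : H →ₗ[ℝ] (X → ℝ) a linear map satisfying |ev f x| ≤ κ·‖f‖ for all f ∈ H, x ∈ X. Let n ≥ 1, (x₁,y₁),…,(xₙ,yₙ) ∈ X × ℝ with |yₖ| ≤ C_y for all k, λ > 0, m > 0, and fix i with 1 ≤ i ≤ n. Suppose f_Z minimizes over H the objective J_Z(f) = (1/n)·Σₖ₌₁ⁿ (yₖ − ev f xₖ)² + λ·‖f‖^m, and f_{Z^i} minimizes over H the objective J_{Z^i}(f) = (1/n)·Σ_{k≠i} (yₖ − ev f xₖ)² + λ·‖f‖^m. Then for every x ∈ X and every y ∈ ℝ with |y| ≤ C_y: |(y − ev f_Z x)² − (y − ev f_{Z^i} x)²| ≤ C·|ev f_Z x − ev f_{Z^i} x|, where C = 2·(C_y + κ·(C_y²/λ)^(1/m)). -/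
theorem norm_le_of_min_aux
    {X H : Type*} [NormedAddCommGroup H] [NormedSpace ℝ H]
    (ev : H →ₗ[ℝ] (X → ℝ))
    (n : ℕ) (hn : 1 ≤ n) (x : Fin n → X) (y : Fin n → ℝ) (Cy : ℝ)
    (hy : ∀ k, |y k| ≤ Cy)
    (lam m : ℝ) (hlam : 0 < lam) (hm : 0 < m) (s : Finset (Fin n)) (g : H)
    (hg : ∀ f : H,
      (1 / (n : ℝ)) * (∑ k ∈ s, (y k - ev g (x k)) ^ 2) + lam * ‖g‖ ^ m ≤
        (1 / (n : ℝ)) * (∑ k ∈ s, (y k - ev f (x k)) ^ 2) + lam * ‖f‖ ^ m) :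
    ‖g‖ ≤ (Cy ^ 2 / lam) ^ (1 / m) := by
  have h0 := hg 0
  have hn0 : (0 : ℝ) < n := by exact_mod_cast hn
  simp only [map_zero, Pi.zero_apply, sub_zero, norm_zero, Real.zero_rpow hm.ne', mul_zero,
    add_zero] at h0
  have h1 : 0 ≤ (1 / (n : ℝ)) * (∑ k ∈ s, (y k - ev g (x k)) ^ 2) := by positivity
  have h2 : ∑ k ∈ s, (y k) ^ 2 ≤ n * Cy ^ 2 := by
    calc ∑ k ∈ s, (y k) ^ 2 ≤ ∑ k, (y k) ^ 2 :=
          Finset.sum_le_sum_of_subset_of_nonneg (Finset.subset_univ s)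
            (fun _ _ _ => sq_nonneg _)
      _ ≤ ∑ _k : Fin n, Cy ^ 2 :=
          Finset.sum_le_sum (fun k _ => sq_le_sq.2 ((hy k).trans (le_abs_self _)))
      _ = n * Cy ^ 2 := by simp
  have h3 : (1 / (n : ℝ)) * ∑ k ∈ s, (y k) ^ 2 ≤ Cy ^ 2 := by
    rw [one_div, inv_mul_le_iff₀ hn0]
    exact h2
  have h4 : ‖g‖ ^ m ≤ Cy ^ 2 / lam := by
    rw [le_div_iff₀ hlam]
    linarith
  have h5 := Real.rpow_le_rpow (by positivity) h4 (by positivity : 0 ≤ 1 / m)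
  rwa [← Real.rpow_mul (norm_nonneg g), mul_one_div_cancel hm.ne', Real.rpow_one] at h5

theorem mrlsr_cost_lipschitz_bound
    {X H : Type*} [NormedAddCommGroup H] [NormedSpace ℝ H]
    (κ : ℝ) (hκ : 0 < κ)
    (ev : H →ₗ[ℝ] (X → ℝ))
    (hev : ∀ (f : H) (x : X), |ev f x| ≤ κ * ‖f‖)
    (n : ℕ) (hn : 1 ≤ n) (x : Fin n → X) (y : Fin n → ℝ) (Cy : ℝ)
    (hy : ∀ k, |y k| ≤ Cy)
    (lam m : ℝ) (hlam : 0 < lam) (hm : 0 < m)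
    (i : Fin n) (fZ fZi : H)
    (hfZ : ∀ f : H,
      (1 / n) * (∑ k, (y k - ev fZ (x k)) ^ 2) + lam * ‖fZ‖ ^ m ≤
        (1 / n) * (∑ k, (y k - ev f (x k)) ^ 2) + lam * ‖f‖ ^ m)
    (hfZi : ∀ f : H,
      (1 / n) * (∑ k ∈ Finset.univ.erase i, (y k - ev fZi (x k)) ^ 2) + lam * ‖fZi‖ ^ m ≤
        (1 / n) * (∑ k ∈ Finset.univ.erase i, (y k - ev f (x k)) ^ 2) + lam * ‖f‖ ^ m) :
    ∀ (x' : X) (y' : ℝ), |y'| ≤ Cy →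
      |(y' - ev fZ x') ^ 2 - (y' - ev fZi x') ^ 2| ≤
        2 * (Cy + κ * (Cy ^ 2 / lam) ^ (1 / m)) * |ev fZ x' - ev fZi x'| := by
  intro x' y' hy'
  have a := norm_le_of_min_aux ev n hn x y Cy hy lam m hlam hm _ fZ hfZ
  have b := norm_le_of_min_aux ev n hn x y Cy hy lam m hlam hm _ fZi hfZi
  have a' := (hev fZ x').trans (mul_le_mul_of_nonneg_left a hκ.le)
  have b' := (hev fZi x').trans (mul_le_mul_of_nonneg_left b hκ.le)
  have e : (y' - ev fZ x') ^ 2 - (y' - ev fZi x') ^ 2 =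
      (ev fZ x' + ev fZi x' - 2 * y') * (ev fZ x' - ev fZi x') := by ring
  rw [e, abs_mul]
  refine mul_le_mul_of_nonneg_right ?_ (abs_nonneg _)
  rw [abs_le] at *
  constructor <;> linarith [a'.1, a'.2, b'.1, b'.2, hy'.1, hy'.2]
end

section
/- Let X be a type, H a real inner product space, and ev : H →ₗ[ℝ] (X → ℝ) a linear map. Let n ≥ 1, (x₁,y₁),…,(xₙ,yₙ) ∈ X × ℝ, λ > 0, m ≥ 2 a real number, and fix i with 1 ≤ i ≤ n. Suppose f_Z minimizes over H the objective J_Z(f) = (1/n)·Σₖ₌₁ⁿ (yₖ − ev f xₖ)² + λ·‖f‖^m, and f_{Z^i} minimizes over H the objective J_{Z^i}(f) = (1/n)·Σ_{k≠i} (yₖ − ev f xₖ)² + λ·‖f‖^m. Then, writing g = (f_Z + f_{Z^i})/2 for the midpoint: 2·λ·n·‖(f_Z − f_{Z^i})/2‖^m ≤ |(yᵢ − ev f_Z xᵢ)² − (yᵢ − ev g xᵢ)²|. -/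
theorem clarkson_aux {H : Type*} [NormedAddCommGroup H] [InnerProductSpace ℝ H]
    (m : ℝ) (hm : 2 ≤ m) (u v : H) :
    2 * (‖((1 : ℝ) / 2) • (u + v)‖ ^ m + ‖((1 : ℝ) / 2) • (u - v)‖ ^ m) ≤ ‖u‖ ^ m + ‖v‖ ^ m := by
  have key : ∀ a : ℝ, 0 ≤ a → (a ^ 2) ^ (m / 2) = a ^ m := by
    intro a ha
    rw [← Real.rpow_natCast, ← Real.rpow_mul ha]
    congr 1
    push_cast
    ring
  have hp : (1 : ℝ) ≤ m / 2 := by linarith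
  have h1 := Real.add_rpow_le_rpow_add (sq_nonneg ‖((1 : ℝ) / 2) • (u + v)‖)
    (sq_nonneg ‖((1 : ℝ) / 2) • (u - v)‖) hp
  have h2 : ‖((1 : ℝ) / 2) • (u + v)‖ ^ 2 + ‖((1 : ℝ) / 2) • (u - v)‖ ^ 2
      = (1 / 2) * ‖u‖ ^ 2 + (1 / 2) * ‖v‖ ^ 2 := by
    have := parallelogram_law_with_norm ℝ u v
    rw [norm_smul, norm_smul]
    norm_num
    nlinarith
  have h3 := (convexOn_rpow hp).2 (Set.mem_Ici.2 (sq_nonneg ‖u‖)) (Set.mem_Ici.2 (sq_nonneg ‖v‖))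
    (by norm_num : (0 : ℝ) ≤ 1 / 2) (by norm_num : (0 : ℝ) ≤ 1 / 2) (by norm_num)
  simp only [smul_eq_mul] at h3
  rw [h2] at h1
  rw [key _ (norm_nonneg _), key _ (norm_nonneg _)] at h1 h3
  linarith

theorem mrlsr_midpoint_stability_inequality
    {X H : Type*} [NormedAddCommGroup H] [InnerProductSpace ℝ H]
    (ev : H →ₗ[ℝ] (X → ℝ))
    (n : ℕ) (hn : 1 ≤ n) (x : Fin n → X) (y : Fin n → ℝ)
    (lam m : ℝ) (hlam : 0 < lam) (hm : 2 ≤ m)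
    (i : Fin n) (fZ fZi : H)
    (hfZ : ∀ f : H,
      (1 / n) * (∑ k, (y k - ev fZ (x k)) ^ 2) + lam * ‖fZ‖ ^ m ≤
        (1 / n) * (∑ k, (y k - ev f (x k)) ^ 2) + lam * ‖f‖ ^ m)
    (hfZi : ∀ f : H,
      (1 / n) * (∑ k ∈ Finset.univ.erase i, (y k - ev fZi (x k)) ^ 2) + lam * ‖fZi‖ ^ m ≤
        (1 / n) * (∑ k ∈ Finset.univ.erase i, (y k - ev f (x k)) ^ 2) + lam * ‖f‖ ^ m) :
    2 * lam * n * ‖((1 : ℝ) / 2) • (fZ - fZi)‖ ^ m ≤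
      |(y i - ev fZ (x i)) ^ 2 - (y i - ev (((1 : ℝ) / 2) • (fZ + fZi)) (x i)) ^ 2| := by
  have hA := hfZ (((1 : ℝ) / 2) • (fZ + fZi))
  have hB := hfZi (((1 : ℝ) / 2) • (fZ + fZi))
  have hC := clarkson_aux m hm fZ fZi
  rw [← Finset.add_sum_erase _ _ (Finset.mem_univ i),
    ← Finset.add_sum_erase _ _ (Finset.mem_univ i)] at hA
  have hS : 2 * (∑ k ∈ Finset.univ.erase i,
      (y k - ev (((1 : ℝ) / 2) • (fZ + fZi)) (x k)) ^ 2) ≤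
      (∑ k ∈ Finset.univ.erase i, (y k - ev fZ (x k)) ^ 2) +
      ∑ k ∈ Finset.univ.erase i, (y k - ev fZi (x k)) ^ 2 := by
    rw [Finset.mul_sum, ← Finset.sum_add_distrib]
    refine Finset.sum_le_sum fun k _ => ?_
    simp only [map_smul, map_add, Pi.smul_apply, Pi.add_apply, smul_eq_mul]
    nlinarith [sq_nonneg (ev fZ (x k) - ev fZi (x k))]
  have hn0 : (0 : ℝ) < n := by exact_mod_cast hn
  have hC' := mul_le_mul_of_nonneg_left hC (mul_pos hlam hn0).le
  have hA' := mul_le_mul_of_nonneg_left hA hn0.le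
  have hB' := mul_le_mul_of_nonneg_left hB hn0.le
  have e : ∀ a b : ℝ, (n : ℝ) * (1 / n * a + lam * b) = a + lam * n * b := by
    intro a b
    field_simp
  rw [e, e] at hA' hB'
  rw [abs_sub_comm]
  refine le_trans ?_ (le_abs_self _)
  linarith
end
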